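/- Let p be a prime with p ≡ 1 (mod 8), and let q be a prime with q ≡ 3 (mod 8) such that the Legendre symbol (p/q) equals −1. Then ℤ_(p) is equal to the set of rational numbers of the form 2(x₁₁ + x₁₂ + y₁₁ + y₁₂) where there exist rationals x_{ij}, y_{ij} (for i ∈ {1,2}, j ∈ {1,2,3,4}) satisfying f_{−2p,q}(x₁₁,x₁₂,x₁₃,x₁₄)² + f_{−2p,q}(x₂₁,x₂₂,x₂₃,x₂₄)² + f_{2p,q}(y₁₁,y₁₂,y₁₃,y₁₄)² + f_{2p,q}(y₂₁,y₂₂,y₂₃,y₂₄)² = 0. -/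

import Mathlib

/-- The polynomial `f_{a,b}(x₁,x₂,x₃,x₄) = x₁² − a·x₂² − b·x₃² + a·b·x₄² − 1`. -/
def fab (a b x₁ x₂ x₃ x₄ : ℚ) : ℚ :=
  x₁ ^ 2 - a * x₂ ^ 2 - b * x₃ ^ 2 + a * b * x₄ ^ 2 - 1

/-- `ℤ_(p)` : the set of rational numbers with nonnegative `p`-adic valuation,
i.e. whose denominator is not divisible by `p`, viewed as a subset of `ℚ`. -/
def Zloc (p : ℕ) : Set ℚ := {x : ℚ | ¬ (p ∣ x.den)}

theorem aux_ceil_sqrt (n : ℕ) (hn : 0 < n) :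
    ∃ K : ℕ, n ≤ K ^ 2 ∧ ∀ i : ℕ, i < K → i ^ 2 < n := by
  refine ⟨Nat.sqrt (n - 1) + 1, ?_, ?_⟩
  · have := Nat.lt_succ_sqrt' (n - 1)
    simp only [Nat.succ_eq_add_one] at this
    omega
  · intro i hi
    have h1 : i ≤ Nat.sqrt (n - 1) := by omega
    have h2 := Nat.le_sqrt'.mp h1
    omega

theorem aux_diff_sq (n K i j : ℕ) (h : ∀ i : ℕ, i < K → i ^ 2 < n) (hi : i < K) (hj : j < K) :
    ((i : ℤ) - j) ^ 2 < n := by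
  have h1 := h ((i : ℤ) - j).natAbs (by omega)
  rw [← Int.natAbs_sq]
  exact_mod_cast h1

theorem aux_rat_of_int (a b : ℚ) (hb : b ≠ 0) (x y z : ℚ)
    (hne : ¬ (x = 0 ∧ y = 0 ∧ z = 0)) (ha : a ≠ 0) (h : x ^ 2 - a * y ^ 2 = b * z ^ 2) :
    ∃ X Y : ℚ, X ^ 2 - a * Y ^ 2 = b := by
  by_cases hz : z = 0
  · subst hz
    have hy : y ≠ 0 := by
      rintro rfl
      apply hne
      refine ⟨?_, rfl, rfl⟩
      simpa using h
    have hx : x ≠ 0 := by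
      rintro rfl
      apply hy
      have : a * y ^ 2 = 0 := by linarith
      simpa [ha] using this
    refine ⟨(b + 1) / 2, (b - 1) / 2 * (y / x), ?_⟩
    have : a * y ^ 2 = x ^ 2 := by linarith
    have h2 : a * ((b - 1) / 2 * (y / x)) ^ 2 = ((b - 1) / 2) ^ 2 * (a * y ^ 2 / x ^ 2) := by
      ring
    rw [h2, this, div_self (pow_ne_zero 2 hx)]
    ring
  · refine ⟨x / z, y / z, ?_⟩
    field_simp
    linarith

theorem aux_legendre (a : ℤ) (b : ℕ) (ha : a ≠ 0) (hb : ¬ IsSquare b)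
    (hcop : IsCoprime a (b : ℤ)) (α β : ℤ) (hα : (b : ℤ) ∣ α ^ 2 - a) (hβ : a ∣ β ^ 2 - b) :
    ∃ X Y : ℚ, X ^ 2 - a * Y ^ 2 = b := by
  have hb0 : 0 < b := by
    rcases Nat.eq_zero_or_pos b with h | h
    · exact absurd ⟨0, by simpa using h⟩ hb
    · exact h
  set A := a.natAbs with hA
  have hA0 : 0 < A := Int.natAbs_pos.mpr ha
  obtain ⟨Kx, hKx, hKx'⟩ := aux_ceil_sqrt (A * b) (by positivity)
  obtain ⟨Ky, hKy, hKy'⟩ := aux_ceil_sqrt b hb0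
  obtain ⟨Kz, hKz, hKz'⟩ := aux_ceil_sqrt A hA0
  have hKy2 : b < Ky ^ 2 := by
    rcases hKy.lt_or_eq with h | h
    · exact h
    · exact absurd ⟨Ky, by rw [h]; ring⟩ hb
  have hcard : A * b < Kx * (Ky * Kz) := by
    have h1 : (A * b) ^ 2 < (Kx * (Ky * Kz)) ^ 2 := by
      calc (A * b) ^ 2 = (A * b) * (b * A) := by ring
        _ < (A * b) * (Ky ^ 2 * A) := by
            apply Nat.mul_lt_mul_of_pos_left _ (by positivity)
            exact Nat.mul_lt_mul_of_pos_right hKy2 hA0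
        _ ≤ Kx ^ 2 * (Ky ^ 2 * Kz ^ 2) := by gcongr
        _ = _ := by ring
    exact lt_of_pow_lt_pow_left₀ 2 (by positivity) h1
  haveI : NeZero A := ⟨hA0.ne'⟩
  haveI : NeZero b := ⟨hb0.ne'⟩
  let f : Fin Kx × Fin Ky × Fin Kz → ZMod A × ZMod b := fun t =>
    ((((t.1 : ℕ) : ℤ) - β * ((t.2.2 : ℕ) : ℤ) : ℤ), (((t.1 : ℕ) : ℤ) - α * ((t.2.1 : ℕ) : ℤ) : ℤ))
  obtain ⟨⟨x, y, z⟩, ⟨x', y', z'⟩, hne, heq⟩ := Fintype.exists_ne_map_eq_of_card_lt f (by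
    simpa [ZMod.card] using hcard)
  simp only [f, Prod.mk.injEq] at heq
  obtain ⟨e1, e2⟩ := heq
  rw [ZMod.intCast_eq_intCast_iff_dvd_sub] at e1 e2
  have e1' : a ∣ _ := (Int.dvd_natAbs.mpr dvd_rfl).trans e1
  have hX := aux_diff_sq _ _ _ _ hKx' x'.2 x.2
  have hY := aux_diff_sq _ _ _ _ hKy' y'.2 y.2
  have hZ := aux_diff_sq _ _ _ _ hKz' z'.2 z.2
  obtain ⟨X, hXe⟩ : ∃ X : ℤ, X = ((x' : ℕ) : ℤ) - ((x : ℕ) : ℤ) := ⟨_, rfl⟩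
  obtain ⟨Y, hYe⟩ : ∃ Y : ℤ, Y = ((y' : ℕ) : ℤ) - ((y : ℕ) : ℤ) := ⟨_, rfl⟩
  obtain ⟨Z, hZe⟩ : ∃ Z : ℤ, Z = ((z' : ℕ) : ℤ) - ((z : ℕ) : ℤ) := ⟨_, rfl⟩
  rw [← hXe] at hX
  rw [← hYe] at hY
  rw [← hZe] at hZ
  have d1 : a ∣ X - β * Z := by
    convert e1' using 1
    rw [hXe, hZe]; ring
  have d2 : (b : ℤ) ∣ X - α * Y := by
    convert e2 using 1
    rw [hXe, hYe]; ring
  have hne' : ¬ (X = 0 ∧ Y = 0 ∧ Z = 0) := by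
    rintro ⟨h1, h2, h3⟩
    apply hne
    have h1' : (x : ℕ) = x' := by omega
    have h2' : (y : ℕ) = y' := by omega
    have h3' : (z : ℕ) = z' := by omega
    simp [Fin.ext_iff, h1', h2', h3']
  clear hXe hYe hZe e1 e1' e2 hne hKx' hKy' hKz' hKx hKy hKz f
  have D1 : a ∣ X ^ 2 - a * Y ^ 2 - b * Z ^ 2 := by
    have : X ^ 2 - a * Y ^ 2 - b * Z ^ 2
        = (X - β * Z) * (X + β * Z) + (β ^ 2 - b) * Z ^ 2 - a * Y ^ 2 := by ring
    rw [this]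
    exact dvd_sub (dvd_add (d1.mul_right _) (hβ.mul_right _)) (dvd_mul_right _ _)
  have D2 : (b : ℤ) ∣ X ^ 2 - a * Y ^ 2 - b * Z ^ 2 := by
    have : X ^ 2 - a * Y ^ 2 - b * Z ^ 2
        = (X - α * Y) * (X + α * Y) + (α ^ 2 - a) * Y ^ 2 - b * Z ^ 2 := by ring
    rw [this]
    exact dvd_sub (dvd_add (d2.mul_right _) (hα.mul_right _)) (dvd_mul_right _ _)
  obtain ⟨k, hk⟩ := hcop.mul_dvd D1 D2
  have hbZ : (0 : ℤ) < b := by exact_mod_cast hb0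
  have hAabs : (A : ℤ) = |a| := by rw [hA]; simp
  push_cast at hX
  rw [hAabs] at hX hZ
  have hk01 : k = 0 ∨ k = -1 := by
    have hx0 := sq_nonneg X
    have hy0 := sq_nonneg Y
    have hz0 := sq_nonneg Z
    rcases lt_or_gt_of_ne ha with h | h
    · rw [abs_of_neg h] at hX hZ
      have hpos : 0 < -a * b := by nlinarith
      have m1 : -a * Y ^ 2 < -a * b := by nlinarith
      have m2 : b * Z ^ 2 < b * (-a) := by nlinarith
      have m3 : 0 ≤ -a * Y ^ 2 := by nlinarith
      have m4 : 0 ≤ b * Z ^ 2 := by nlinarith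
      have u1 : (-a * b) * (-k) < (-a * b) * 2 := by nlinarith
      have u2 : (-a * b) * (-1) < (-a * b) * (-k) := by nlinarith
      have v1 := lt_of_mul_lt_mul_left u1 hpos.le
      have v2 := lt_of_mul_lt_mul_left u2 hpos.le
      omega
    · rw [abs_of_pos h] at hX hZ
      have hpos : 0 < a * b := by nlinarith
      have m1 : a * Y ^ 2 < a * b := by nlinarith
      have m2 : b * Z ^ 2 < b * a := by nlinarith
      have m3 : 0 ≤ a * Y ^ 2 := by nlinarith
      have m4 : 0 ≤ b * Z ^ 2 := by nlinarith
      have u1 : (a * b) * k < (a * b) * 1 := by nlinarith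
      have u2 : (a * b) * (-2) < (a * b) * k := by nlinarith
      have v1 := lt_of_mul_lt_mul_left u1 hpos.le
      have v2 := lt_of_mul_lt_mul_left u2 hpos.le
      omega
  have haQ : (a : ℚ) ≠ 0 := by exact_mod_cast ha
  have hbQ : (b : ℚ) ≠ 0 := by exact_mod_cast hb0.ne'
  have hkQ : (X : ℚ) ^ 2 - a * Y ^ 2 - b * Z ^ 2 = a * b * k := by exact_mod_cast hk
  rcases hk01 with rfl | rfl
  · refine aux_rat_of_int a b hbQ X Y Z ?_ haQ ?_
    · exact_mod_cast hne'
    · push_cast at hkQ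
      linarith
  · have hden : (Z : ℚ) ^ 2 - a ≠ 0 := by
      have : Z ^ 2 - a ≠ 0 := by
        intro h0
        have h1 : Z ^ 2 = a := by linarith
        have h2 : |a| = a := abs_of_nonneg (by rw [← h1]; positivity)
        rw [h2, h1] at hZ
        exact lt_irrefl _ hZ
      exact_mod_cast this
    push_cast at hkQ
    refine ⟨(X * Z - a * Y) / (Z ^ 2 - a), (Y * Z - X) / (Z ^ 2 - a), ?_⟩
    rw [div_pow, div_pow, ← mul_div_assoc, ← sub_div, div_eq_iff (pow_ne_zero 2 hden)]
    have h3 : (X : ℚ) ^ 2 - a * Y ^ 2 = b * (Z ^ 2 - a) := by linarith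
    calc ((X : ℚ) * Z - a * Y) ^ 2 - a * (Y * Z - X) ^ 2
        = (X ^ 2 - a * Y ^ 2) * (Z ^ 2 - a) := by ring
      _ = _ := by rw [h3]; ring

/-- The quaternion norm form is `p`-anisotropic: integral version. -/
theorem aux_aniso_step (p q : ℕ) [Fact p.Prime] (hq : ¬ IsSquare ((q : ℤ) : ZMod p)) (ε : ℤ)
    (hε : ¬ (p : ℤ) ∣ ε) (a b c d : ℤ)
    (h : (p : ℤ) ^ 2 ∣ a ^ 2 + ε * p * b ^ 2 - q * (c ^ 2 + ε * p * d ^ 2)) :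
    (p : ℤ) ∣ a ∧ (p : ℤ) ∣ b ∧ (p : ℤ) ∣ c ∧ (p : ℤ) ∣ d := by
  have hp0 : (p : ℤ) ≠ 0 := by exact_mod_cast (Fact.out : p.Prime).ne_zero
  have key : ∀ x y : ℤ, (p : ℤ) ∣ x ^ 2 - q * y ^ 2 → (p : ℤ) ∣ x ∧ (p : ℤ) ∣ y := by
    intro x y hxy
    rw [← ZMod.intCast_zmod_eq_zero_iff_dvd] at hxy ⊢
    rw [← ZMod.intCast_zmod_eq_zero_iff_dvd]
    push_cast at hxy
    have hy : (y : ZMod p) = 0 := by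
      by_contra hy
      apply hq
      refine ⟨(x : ZMod p) / y, ?_⟩
      push_cast
      field_simp
      linear_combination -hxy
    refine ⟨?_, hy⟩
    rw [hy] at hxy
    simpa using hxy
  obtain ⟨k, hk⟩ := h
  obtain ⟨⟨a', rfl⟩, ⟨c', rfl⟩⟩ := key a c
    ⟨p * k - ε * b ^ 2 + q * ε * d ^ 2, by linear_combination hk⟩
  have h2 : (p : ℤ) ∣ ε * (b ^ 2 - q * d ^ 2) := by
    refine ⟨k - a' ^ 2 + q * c' ^ 2, ?_⟩
    apply mul_left_cancel₀ hp0
    linear_combination hk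
  have hpp : Prime (p : ℤ) := Nat.prime_iff_prime_int.mp Fact.out
  obtain ⟨hb, hd⟩ := key b d ((hpp.dvd_or_dvd h2).resolve_left hε)
  exact ⟨dvd_mul_right _ _, hb, dvd_mul_right _ _, hd⟩

theorem aux_den (p : ℕ) (x : ℤ) (n : ℕ) (hn : ¬ p ∣ n) : ¬ p ∣ ((x : ℚ) / n).den := by
  intro h
  apply hn
  have h1 := Rat.den_dvd x n
  rw [Rat.divInt_eq_div] at h1
  have h2 : ((x : ℚ) / n).den ∣ n := by exact_mod_cast h1
  exact h.trans h2

theorem aux_integral_int (p q : ℕ) [Fact p.Prime] (hq : ¬ IsSquare ((q : ℤ) : ZMod p)) (ε : ℤ)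
    (hε : ¬ (p : ℤ) ∣ ε) (m : ℤ) : ∀ n : ℕ, 0 < n → ∀ a b c d : ℤ,
    a ^ 2 + ε * p * b ^ 2 - q * (c ^ 2 + ε * p * d ^ 2) = m * n ^ 2 →
    (¬ p ∣ ((a : ℚ) / n).den) ∧ (¬ p ∣ ((b : ℚ) / n).den) ∧ (¬ p ∣ ((c : ℚ) / n).den) ∧
      (¬ p ∣ ((d : ℚ) / n).den) := by
  intro n
  induction n using Nat.strong_induction_on with
  | _ n ih =>
    intro hn a b c d h
    by_cases hpn : p ∣ n
    · obtain ⟨n', rfl⟩ := hpn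
      have hp : p.Prime := Fact.out
      have hn' : 0 < n' := Nat.pos_of_mul_pos_left hn
      have hp0 : (p : ℤ) ≠ 0 := by exact_mod_cast hp.ne_zero
      have hp0' : (p : ℚ) ≠ 0 := by exact_mod_cast hp.ne_zero
      obtain ⟨⟨a', rfl⟩, ⟨b', rfl⟩, ⟨c', rfl⟩, ⟨d', rfl⟩⟩ := aux_aniso_step p q hq ε hε a b c d
        (by rw [h]; push_cast; exact ⟨m * n' ^ 2, by ring⟩)
      have := ih n' (by nlinarith [hp.two_le]) hn' a' b' c' d' (by
        apply mul_left_cancel₀ (pow_ne_zero 2 hp0)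
        push_cast at h
        linear_combination h)
      push_cast
      simpa only [mul_div_mul_left _ _ hp0'] using this
    · exact ⟨aux_den _ _ _ hpn, aux_den _ _ _ hpn, aux_den _ _ _ hpn, aux_den _ _ _ hpn⟩

theorem aux_common_den (a b c d : ℚ) : ∃ (n : ℕ) (A B C D : ℤ), 0 < n ∧ a = A / n ∧ b = B / n ∧
    c = C / n ∧ d = D / n := by
  refine ⟨a.den * b.den * c.den * d.den, a.num * (b.den * c.den * d.den),
    b.num * (a.den * c.den * d.den), c.num * (a.den * b.den * d.den),
    d.num * (a.den * b.den * c.den), ?_, ?_, ?_, ?_, ?_⟩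
  · have := a.pos; have := b.pos; have := c.pos; have := d.pos
    positivity
  all_goals
    have h1 : (a.den : ℚ) ≠ 0 := by exact_mod_cast a.den_nz
    have h2 : (b.den : ℚ) ≠ 0 := by exact_mod_cast b.den_nz
    have h3 : (c.den : ℚ) ≠ 0 := by exact_mod_cast c.den_nz
    have h4 : (d.den : ℚ) ≠ 0 := by exact_mod_cast d.den_nz
    push_cast
  · conv_lhs => rw [← Rat.num_div_den a]
    field_simp
  · conv_lhs => rw [← Rat.num_div_den b]
    field_simp
  · conv_lhs => rw [← Rat.num_div_den c]
    field_simp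
  · conv_lhs => rw [← Rat.num_div_den d]
    field_simp

theorem aux_integral (p q : ℕ) [Fact p.Prime] (hq : ¬ IsSquare ((q : ℤ) : ZMod p)) (ε : ℤ)
    (hε : ¬ (p : ℤ) ∣ ε) (m : ℤ) (a b c d : ℚ)
    (h : a ^ 2 + ε * p * b ^ 2 - q * (c ^ 2 + ε * p * d ^ 2) = m) :
    (¬ p ∣ a.den) ∧ (¬ p ∣ b.den) ∧ (¬ p ∣ c.den) ∧ (¬ p ∣ d.den) := by
  obtain ⟨n, A, B, C, D, hn, rfl, rfl, rfl, rfl⟩ := aux_common_den a b c d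
  apply aux_integral_int p q hq ε hε m n hn
  have hn' : (n : ℚ) ≠ 0 := by exact_mod_cast hn.ne'
  field_simp at h
  have : (A : ℚ) ^ 2 + ε * p * B ^ 2 - q * (C ^ 2 + ε * p * D ^ 2) = m * n ^ 2 := by
    linear_combination h
  exact_mod_cast this

theorem aux_inf_div (p : ℕ) (hp : p.Prime) (x : ℚ) (h : ∀ k : ℕ, ¬ p ∣ (x / (p : ℚ) ^ k).den) :
    x = 0 := by
  by_contra hx
  have hnum : x.num ≠ 0 := Rat.num_ne_zero.mpr hx
  have hall : ∀ k : ℕ, ((p ^ k : ℕ) : ℤ) ∣ x.num := by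
    intro k
    set y := x / (p : ℚ) ^ k with hy
    have hpk : (p : ℚ) ^ k ≠ 0 := pow_ne_zero _ (by exact_mod_cast hp.ne_zero)
    have h1 : x = y * p ^ k := by rw [hy]; field_simp
    have h2 : x.num * y.den = (p ^ k : ℕ) * (y.num * x.den) := by
      have hx1 : (x.den : ℚ) ≠ 0 := by exact_mod_cast x.den_nz
      have hy1 : (y.den : ℚ) ≠ 0 := by exact_mod_cast y.den_nz
      have : (x.num : ℚ) * y.den = (p ^ k : ℕ) * (y.num * x.den) := by
        have e1 : (x.num : ℚ) = x * x.den := (Rat.mul_den_eq_num x).symm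
        have e2 : (y.num : ℚ) = y * y.den := (Rat.mul_den_eq_num y).symm
        rw [e1, e2]
        push_cast
        nth_rewrite 1 [h1]
        ring
      exact_mod_cast this
    have hc : IsCoprime ((p ^ k : ℕ) : ℤ) (y.den : ℤ) := by
      rw [Nat.isCoprime_iff_coprime]
      exact Nat.Coprime.pow_left k ((Nat.Prime.coprime_iff_not_dvd hp).mpr (h k))
    exact hc.dvd_of_dvd_mul_right ⟨_, h2⟩
  have h3 := Int.le_of_dvd (abs_pos.mpr hnum) ((dvd_abs _ _).mpr (hall x.num.natAbs))
  have h4 := Nat.lt_pow_self hp.one_lt (n := x.num.natAbs)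
  rw [Int.abs_eq_natAbs] at h3
  omega

theorem aux_aniso (p q : ℕ) [Fact p.Prime] (hq : ¬ IsSquare ((q : ℤ) : ZMod p)) (ε : ℤ)
    (hε : ¬ (p : ℤ) ∣ ε) (a b c d : ℚ)
    (h : a ^ 2 + ε * p * b ^ 2 - q * (c ^ 2 + ε * p * d ^ 2) = 0) : c = 0 ∧ d = 0 := by
  have hp : p.Prime := Fact.out
  have hp0 : (p : ℚ) ≠ 0 := by exact_mod_cast hp.ne_zero
  have key : ∀ k : ℕ, _ := fun k => aux_integral p q hq ε hε 0 (a / p ^ k) (b / p ^ k) (c / p ^ k)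
    (d / p ^ k) (by
      have : (a / p ^ k) ^ 2 + ε * p * (b / p ^ k) ^ 2 -
        q * ((c / p ^ k) ^ 2 + ε * p * (d / p ^ k) ^ 2)
        = (a ^ 2 + ε * p * b ^ 2 - q * (c ^ 2 + ε * p * d ^ 2)) / (p ^ k) ^ 2 := by ring
      rw [this, h]; simp)
  exact ⟨aux_inf_div p hp c fun k => (key k).2.2.1, aux_inf_div p hp d fun k => (key k).2.2.2⟩

/-- Norm one elements with prescribed `x₁ + x₂`. -/
theorem aux_build (p q : ℕ) [Fact p.Prime] (hq : ¬ IsSquare ((q : ℤ) : ZMod p)) (ε : ℤ)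
    (hε : ¬ (p : ℤ) ∣ ε) (e f : ℚ) (hf : f ≠ 0) (S T X Y : ℚ) (hST : ¬ (S = 0 ∧ T = 0))
    (h : (q : ℚ) * (S ^ 2 + ε * p * T ^ 2)
      = X ^ 2 - (f ^ 2 + 4 * (ε * p) * f * e - 4 * (ε * p) * e ^ 2) * Y ^ 2) :
    ∃ x₁ x₂ x₃ x₄ : ℚ, x₁ ^ 2 + ε * p * x₂ ^ 2 - q * (x₃ ^ 2 + ε * p * x₄ ^ 2) = 1 ∧
      x₁ + x₂ = 2 * (e / f) - 1 := by
  have hp : p.Prime := Fact.out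
  have hp0 : (p : ℚ) ≠ 0 := by exact_mod_cast hp.ne_zero
  have hε0 : (ε : ℚ) ≠ 0 := by
    intro h0
    apply hε
    have : ε = 0 := by exact_mod_cast h0
    rw [this]; exact dvd_zero _
  obtain ⟨P, hP⟩ : ∃ P : ℚ, P = ε * p := ⟨_, rfl⟩
  have hP0 : P ≠ 0 := by rw [hP]; exact mul_ne_zero hε0 hp0
  have aniso := fun a b c d h => aux_aniso p q hq ε hε a b c d h
  simp only [← hP] at h aniso ⊢
  obtain ⟨a, ha⟩ : ∃ a : ℚ, a = e * Y := ⟨_, rfl⟩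
  obtain ⟨b, hb⟩ : ∃ b : ℚ, b = (X + f * Y) / (2 * P) := ⟨_, rfl⟩
  obtain ⟨c, hc⟩ : ∃ c : ℚ, c = T / 2 := ⟨_, rfl⟩
  obtain ⟨d, hd⟩ : ∃ d : ℚ, d = S / (2 * P) := ⟨_, rfl⟩
  obtain ⟨N, hN⟩ : ∃ N : ℚ, N = a ^ 2 + P * b ^ 2 - q * (c ^ 2 + P * d ^ 2) := ⟨_, rfl⟩
  have hN0 : N ≠ 0 := by
    intro h0
    obtain ⟨h1, h2⟩ := aniso a b c d (by rw [← hN, h0])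
    apply hST
    constructor
    · rw [hd] at h2
      simpa [hP0] using h2
    · rw [hc] at h1
      simpa using h1
  have hrel : f * (a * (a + b)) = e * N := by
    rw [hN, ha, hb, hc, hd]
    field_simp
    linear_combination (e) * h
  refine ⟨2 * a ^ 2 / N - 1, 2 * a * b / N, 2 * a * c / N, 2 * a * d / N, ?_, ?_⟩
  · have : (2 * a ^ 2 / N - 1) ^ 2 + P * (2 * a * b / N) ^ 2 -
      q * ((2 * a * c / N) ^ 2 + P * (2 * a * d / N) ^ 2)
      = 4 * a ^ 2 * (a ^ 2 + P * b ^ 2 - q * (c ^ 2 + P * d ^ 2)) / N ^ 2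
        - 4 * a ^ 2 / N + 1 := by ring
    rw [this, ← hN]
    field_simp
    ring
  · field_simp
    linear_combination 2 * hrel

theorem aux_exists_sq_dvd (b : ℕ) (a : ℤ) (h : IsSquare (a : ZMod b)) :
    ∃ α : ℤ, (b : ℤ) ∣ α ^ 2 - a := by
  obtain ⟨r, hr⟩ := h
  obtain ⟨α, rfl⟩ := ZMod.intCast_surjective r
  refine ⟨α, ?_⟩
  rw [← ZMod.intCast_zmod_eq_zero_iff_dvd]
  push_cast
  rw [hr]; ring

theorem aux_sq_mul (m n : ℕ) (hmn : m.Coprime n) (a : ℤ) (h1 : IsSquare (a : ZMod m))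
    (h2 : IsSquare (a : ZMod n)) : IsSquare (a : ZMod (m * n)) := by
  obtain ⟨r, hr⟩ := h1
  obtain ⟨s, hs⟩ := h2
  refine ⟨(ZMod.chineseRemainder hmn).symm (r, s), ?_⟩
  apply (ZMod.chineseRemainder hmn).injective
  rw [map_mul, RingEquiv.apply_symm_apply, map_intCast]
  ext <;> simp [hr, hs]

theorem aux_not_sq_prime (l : ℕ) (hl : l.Prime) : ¬ IsSquare l := by
  intro h
  exact hl.prime.irreducible.not_isSquare h

theorem aux_not_sq_mul (q l : ℕ) (hq : q.Prime) (hl : l.Prime) (hne : q ≠ l) :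
    ¬ IsSquare (q * l) := by
  rintro ⟨r, hr⟩
  have h1 : q ∣ r := by
    have : q ∣ r * r := ⟨l, hr.symm⟩
    exact (hq.dvd_mul.mp this).elim id id
  obtain ⟨s, rfl⟩ := h1
  have h2 : l = q * (s * s) := by
    apply Nat.eq_of_mul_eq_mul_left hq.pos
    rw [hr]; ring
  have h3 : q ∣ l := ⟨_, h2⟩
  exact hne ((Nat.prime_dvd_prime_iff_eq hq hl).mp h3)

theorem aux_leg_sq (l : ℕ) [Fact l.Prime] (a : ℤ) (h : legendreSym l a = 1) :
    IsSquare (a : ZMod l) := by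
  by_contra hc
  rw [(legendreSym.eq_neg_one_iff l).mpr hc] at h
  norm_num at h

theorem aux_caseX (p q : ℕ) (hp : p.Prime) (hmodp : p % 8 = 1)
    [hqF : Fact q.Prime] (hmodq : q % 8 = 3) (D f : ℤ)
    (hDq : (q : ℤ) ∣ D - f ^ 2) (hfq : ¬ (q : ℤ) ∣ f) (hDp : ¬ (p : ℤ) ∣ D) :
    ∃ S T X Y : ℚ, ¬ (S = 0 ∧ T = 0) ∧
      (q : ℚ) * (S ^ 2 + 2 * p * T ^ 2) = X ^ 2 - D * Y ^ 2 := by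
  have hq : q.Prime := hqF.out
  haveI : Fact p.Prime := ⟨hp⟩
  have hqZ : Prime (q : ℤ) := Nat.prime_iff_prime_int.mp hq
  have hDq' : ¬ (q : ℤ) ∣ D := by
    intro h
    apply hfq
    have : (q : ℤ) ∣ f ^ 2 := (dvd_sub_right h).mp hDq
    exact hqZ.dvd_of_dvd_pow this
  have hD0 : D ≠ 0 := by
    rintro rfl
    exact hDp (dvd_zero _)
  set A := D.natAbs with hA
  have hA0 : 0 < A := Int.natAbs_pos.mpr hD0
  have hpA : ¬ p ∣ A := by
    intro h; apply hDp; exact Int.natCast_dvd.mpr h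
  have hqA : ¬ q ∣ A := by
    intro h; apply hDq'; exact Int.natCast_dvd.mpr h
  have hq2 : q.Coprime 8 := by
    have : q.Coprime (2 ^ 3) := Nat.Coprime.pow_right 3 (by
      rw [Nat.coprime_comm, Nat.Prime.coprime_iff_not_dvd Nat.prime_two]; omega)
    simpa using this
  have hp2 : p.Coprime 8 := by
    have : p.Coprime (2 ^ 3) := Nat.Coprime.pow_right 3 (by
      rw [Nat.coprime_comm, Nat.Prime.coprime_iff_not_dvd Nat.prime_two]; omega)
    simpa using this
  have hcq : q.Coprime (8 * A) :=
    Nat.Coprime.mul_right hq2 ((Nat.Prime.coprime_iff_not_dvd hq).mpr hqA)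
  have hcp : p.Coprime (8 * A) :=
    Nat.Coprime.mul_right hp2 ((Nat.Prime.coprime_iff_not_dvd hp).mpr hpA)
  obtain ⟨r, hr⟩ : ∃ r : ℕ, q * r ≡ 1 [MOD (8 * A)] := by
    obtain ⟨r, -, hr⟩ := Nat.exists_mul_mod_eq_one_of_coprime hcq (by omega)
    exact ⟨r, by rw [Nat.ModEq, hr, Nat.mod_eq_of_lt (by omega)]⟩
  obtain ⟨s, hs1, hs2⟩ := Nat.chineseRemainder hcp.symm r 1
  have hsc : s.Coprime (8 * A * p) := by
    apply Nat.Coprime.mul_right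
    · have : q * s ≡ 1 [MOD (8 * A)] := (hs1.mul_left q).trans hr
      have h1 := this.gcd_eq
      rw [Nat.gcd_one_left] at h1
      exact Nat.Coprime.coprime_mul_left h1
    · have h1 := hs2.gcd_eq
      rw [Nat.gcd_one_left] at h1
      exact h1
  obtain ⟨l, hlq, hl, hls⟩ := Nat.forall_exists_prime_gt_and_modEq (q + p)
    (q := 8 * A * p) (by have := hp.pos; positivity) hsc
  have hl1 : q * l ≡ 1 [MOD (8 * A)] :=
    (((hls.of_mul_right p).trans hs1).mul_left q).trans hr
  have hl2 : l ≡ 1 [MOD p] := (hls.of_mul_left (8 * A)).trans hs2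
  haveI : Fact l.Prime := ⟨hl⟩
  have hl8 : l % 8 = 3 := by
    have h1 : q * l % 8 = 1 % 8 := hl1.of_mul_right A
    rw [Nat.mul_mod, hmodq] at h1
    have := Nat.mod_lt l (show 0 < 8 by norm_num)
    interval_cases (l % 8) <;> simp_all
  have hlodd : l ≠ 2 := by omega
  have hql : q ≠ l := by omega
  -- squares
  have hleg1 : legendreSym l (-2 * p) = 1 := by
    rw [legendreSym.mul, legendreSym.at_neg_two hlodd, ZMod.χ₈'_nat_eq_if_mod_eight,
      legendreSym.quadratic_reciprocity_one_mod_four (by omega) hlodd, legendreSym.mod]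
    have h1 : ((l : ℤ) % p) = 1 % p := by exact_mod_cast hl2
    rw [h1, ← legendreSym.mod, legendreSym.at_one]
    have : l % 2 ≠ 0 := by omega
    simp [hl8, this]
  have hDsqq : IsSquare (D : ZMod q) := by
    refine ⟨f, ?_⟩
    rw [← ZMod.intCast_zmod_eq_zero_iff_dvd] at hDq
    push_cast at hDq
    linear_combination hDq
  have hqleg : legendreSym q D = 1 := by
    rw [legendreSym.eq_one_iff]
    · exact hDsqq
    · rw [Ne, ZMod.intCast_zmod_eq_zero_iff_dvd]; exact hDq'
  have hDl : legendreSym l D = 1 := by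
    haveI : NeZero q := ⟨hq.ne_zero⟩
    haveI : NeZero l := ⟨hl.ne_zero⟩
    have h1 : jacobiSym D (q * l) = 1 := by
      rw [jacobiSym.mod_right]
      · have : q * l % (4 * D.natAbs) = 1 := by
          have h2 : q * l ≡ 1 [MOD (4 * A)] :=
            Nat.ModEq.of_mul_left 2 (by convert hl1 using 1; ring)
          rw [Nat.ModEq] at h2
          rw [← hA, h2, Nat.mod_eq_of_lt (by omega)]
        rw [this, jacobiSym.one_right]
      · apply Odd.mul
        · rw [Nat.odd_iff]; omega
        · rw [Nat.odd_iff]; omega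
    rw [jacobiSym.mul_right, ← jacobiSym.legendreSym.to_jacobiSym,
      ← jacobiSym.legendreSym.to_jacobiSym, hqleg, one_mul] at h1
    exact h1
  -- first conic
  obtain ⟨α, hα⟩ := aux_exists_sq_dvd l _ (aux_leg_sq l _ hleg1)
  have hpl : (2 * p).Coprime l := by
    rw [Nat.coprime_comm, Nat.Prime.coprime_iff_not_dvd hl]
    intro h
    rcases hl.dvd_mul.mp h with h | h
    · exact hlodd ((Nat.prime_dvd_prime_iff_eq hl Nat.prime_two).mp h)
    · have := Nat.le_of_dvd hp.pos h
      omega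
  obtain ⟨S, T, hST⟩ := aux_legendre (-2 * p) l (by have := hp.pos; omega)
    (aux_not_sq_prime l hl)
    (by
      have : IsCoprime ((2 * p : ℕ) : ℤ) (l : ℤ) := Nat.isCoprime_iff_coprime.mpr hpl
      have h2 := this.neg_left
      push_cast at h2
      rwa [neg_mul]) α 1 hα
    (by
      have h2 : 2 * p ∣ l - 1 := by
        apply Nat.Coprime.mul_dvd_of_dvd_of_dvd
        · rw [Nat.Prime.coprime_iff_not_dvd Nat.prime_two]; omega
        · omega
        · exact (Nat.modEq_iff_dvd' hl.one_le).mp hl2.symm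
      have h3 : ((2 * p : ℕ) : ℤ) ∣ ((l - 1 : ℕ) : ℤ) := by exact_mod_cast h2
      rw [Nat.cast_sub hl.one_le] at h3
      push_cast at h3
      obtain ⟨k, hk⟩ := h3
      exact ⟨k, by linear_combination -hk⟩)
  -- second conic
  obtain ⟨γ, hγ⟩ := aux_exists_sq_dvd (q * l) D (aux_sq_mul q l
    ((Nat.coprime_primes hq hl).mpr hql) D hDsqq (aux_leg_sq l _ hDl))
  have hm1 : D ∣ 1 ^ 2 - ((q * l : ℕ) : ℤ) := by
    have h2 : 1 ≡ q * l [MOD A] := (hl1.of_mul_left 8).symm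
    have h3 := (Nat.modEq_iff_dvd.mp h2)
    rw [hA, Int.natAbs_dvd] at h3
    obtain ⟨k, hk⟩ := h3
    refine ⟨-k, ?_⟩
    push_cast at hk ⊢
    linear_combination -hk
  obtain ⟨X, Y, hXY⟩ := aux_legendre D (q * l) hD0 (aux_not_sq_mul q l hq hl hql)
    (by
      obtain ⟨k, hk⟩ := hm1
      exact ⟨k, 1, by linear_combination -hk⟩) γ 1 hγ hm1
  refine ⟨S, T, X, Y, ?_, ?_⟩
  · rintro ⟨rfl, rfl⟩
    have h0 : (l : ℚ) = 0 := by rw [← hST]; ring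
    exact hl.ne_zero (by exact_mod_cast h0)
  · rw [hXY]
    push_cast at hST ⊢
    linear_combination (q : ℚ) * hST

theorem aux_caseY (p q : ℕ) (hp : p.Prime) (hmodp : p % 8 = 1)
    [hqF : Fact q.Prime] (hmodq : q % 8 = 3) (hleg : legendreSym q (p : ℤ) = -1) (D : ℤ)
    (hD2 : ¬ (2 : ℤ) ∣ D) (hDp : ¬ (p : ℤ) ∣ D) :
    ∃ S T X Y : ℚ, ¬ (S = 0 ∧ T = 0) ∧
      (q : ℚ) * (S ^ 2 - 2 * p * T ^ 2) = X ^ 2 - D * Y ^ 2 := by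
  have hq : q.Prime := hqF.out
  haveI : Fact p.Prime := ⟨hp⟩
  have hD0 : D ≠ 0 := by
    rintro rfl
    exact hDp (dvd_zero _)
  have hpq : p ≠ q := by omega
  set A := D.natAbs with hA
  have hA0 : 0 < A := Int.natAbs_pos.mpr hD0
  have hpA : ¬ p ∣ A := by
    intro h; apply hDp; exact Int.natCast_dvd.mpr h
  have h2A : ¬ 2 ∣ A := by omega
  have hp2 : p.Coprime 8 := by
    have : p.Coprime (2 ^ 3) := Nat.Coprime.pow_right 3 (by
      rw [Nat.coprime_comm, Nat.Prime.coprime_iff_not_dvd Nat.prime_two]; omega)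
    simpa using this
  have h8A : Nat.Coprime 8 A := by
    have : (2 ^ 3).Coprime A := Nat.Coprime.pow_left 3 (by
      rw [Nat.Prime.coprime_iff_not_dvd Nat.prime_two]; omega)
    simpa using this
  have hcp : p.Coprime (8 * A) :=
    Nat.Coprime.mul_right hp2 ((Nat.Prime.coprime_iff_not_dvd hp).mpr hpA)
  obtain ⟨r, hr1, hr2⟩ := Nat.chineseRemainder h8A 5 1
  obtain ⟨s, hs1, hs2⟩ := Nat.chineseRemainder hcp.symm r q
  have hs8 : s ≡ 5 [MOD 8] := (hs1.of_mul_right A).trans hr1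
  have hsA : s ≡ 1 [MOD A] := (hs1.of_mul_left 8).trans hr2
  have hsc : s.Coprime (8 * A * p) := by
    apply Nat.Coprime.mul_right
    · apply Nat.Coprime.mul_right
      · have h1 := hs8.gcd_eq
        rw [Nat.coprime_iff_gcd_eq_one, h1]; norm_num
      · have h1 := hsA.gcd_eq
        rw [Nat.gcd_one_left] at h1
        exact h1
    · have h1 := hs2.gcd_eq
      rw [Nat.coprime_iff_gcd_eq_one, h1]
      exact (Nat.coprime_primes hq hp).mpr hpq.symm
  obtain ⟨l, hlq, hl, hls⟩ := Nat.forall_exists_prime_gt_and_modEq (q + p)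
    (q := 8 * A * p) (by have := hp.pos; positivity) hsc
  have hl8 : l % 8 = 5 := ((hls.of_mul_right p).of_mul_right A).trans hs8
  have hlA : l ≡ 1 [MOD A] := ((hls.of_mul_right p).of_mul_left 8).trans hsA
  have hl2 : l ≡ q [MOD p] := (hls.of_mul_left (8 * A)).trans hs2
  haveI : Fact l.Prime := ⟨hl⟩
  have hlodd : l ≠ 2 := by omega
  have hql : q ≠ l := by omega
  have hleg' : legendreSym p (q : ℤ) = -1 := by
    rw [← legendreSym.quadratic_reciprocity_one_mod_four (by omega) (by omega), hleg]
  have hleg1 : legendreSym l (2 * p) = 1 := by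
    rw [legendreSym.mul, legendreSym.at_two hlodd, ZMod.χ₈_nat_eq_if_mod_eight,
      legendreSym.quadratic_reciprocity_one_mod_four (by omega) hlodd, legendreSym.mod]
    have h1 : ((l : ℤ) % p) = q % p := by exact_mod_cast hl2
    rw [h1, ← legendreSym.mod, hleg']
    have : l % 2 ≠ 0 := by omega
    simp [hl8, this]
  have hleg2 : legendreSym q (2 * p) = 1 := by
    rw [legendreSym.mul, legendreSym.at_two (by omega), ZMod.χ₈_nat_eq_if_mod_eight, hleg]
    have : q % 2 ≠ 0 := by omega
    simp [hmodq, this]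
  have hDl : legendreSym l D = 1 := by
    rw [jacobiSym.legendreSym.to_jacobiSym, jacobiSym.mod_right]
    · have : l % (4 * D.natAbs) = 1 := by
        have h4 : Nat.Coprime 4 A := Nat.Coprime.coprime_dvd_left (by norm_num) h8A
        have h2 : l ≡ 1 [MOD (4 * A)] :=
          (Nat.modEq_and_modEq_iff_modEq_mul h4).mp ⟨by rw [Nat.ModEq]; omega, hlA⟩
        rw [Nat.ModEq] at h2
        rw [← hA, h2, Nat.mod_eq_of_lt (by omega)]
      rw [this, jacobiSym.one_right]
    · rw [Nat.odd_iff]; omega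
  -- first conic
  obtain ⟨α, hα⟩ := aux_exists_sq_dvd (q * l) _ (aux_sq_mul q l
    ((Nat.coprime_primes hq hl).mpr hql) _ (aux_leg_sq q _ hleg2) (aux_leg_sq l _ hleg1))
  have hpl : (2 * p).Coprime l := by
    rw [Nat.coprime_comm, Nat.Prime.coprime_iff_not_dvd hl]
    intro h
    rcases hl.dvd_mul.mp h with h | h
    · exact hlodd ((Nat.prime_dvd_prime_iff_eq hl Nat.prime_two).mp h)
    · have := Nat.le_of_dvd hp.pos h
      omega
  have hpq' : (2 * p).Coprime q := by
    rw [Nat.coprime_comm, Nat.Prime.coprime_iff_not_dvd hq]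
    intro h
    rcases hq.dvd_mul.mp h with h | h
    · have := ((Nat.prime_dvd_prime_iff_eq hq Nat.prime_two).mp h)
      omega
    · exact hpq ((Nat.prime_dvd_prime_iff_eq hq hp).mp h).symm
  obtain ⟨S, T, hST⟩ := aux_legendre (2 * p) (q * l) (by have := hp.pos; omega)
    (aux_not_sq_mul q l hq hl hql)
    (by exact_mod_cast Nat.isCoprime_iff_coprime.mpr (Nat.Coprime.mul_right hpq' hpl)) α q hα
    (by
      have h2 : l ≡ q [MOD (2 * p)] := by
        apply (Nat.modEq_and_modEq_iff_modEq_mul _).mp ⟨?_, hl2⟩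
        · rw [Nat.Prime.coprime_iff_not_dvd Nat.prime_two]; omega
        · rw [Nat.ModEq]; omega
      obtain ⟨k, hk⟩ := Nat.modEq_iff_dvd.mp h2
      push_cast at hk
      exact ⟨q * k, by push_cast; linear_combination (q : ℤ) * hk⟩)
  -- second conic
  obtain ⟨γ, hγ⟩ := aux_exists_sq_dvd l D (aux_leg_sq l _ hDl)
  have hm1 : D ∣ 1 ^ 2 - (l : ℤ) := by
    have h3 := (Nat.modEq_iff_dvd.mp hlA)
    rw [hA, Int.natAbs_dvd] at h3
    simpa using h3
  obtain ⟨X, Y, hXY⟩ := aux_legendre D l hD0 (aux_not_sq_prime l hl)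
    (by
      obtain ⟨k, hk⟩ := hm1
      exact ⟨k, 1, by linear_combination -hk⟩) γ 1 hγ hm1
  have hq0 : (q : ℚ) ≠ 0 := by exact_mod_cast hq.ne_zero
  have hl0 : (l : ℚ) ≠ 0 := by exact_mod_cast hl.ne_zero
  refine ⟨S / q, T / q, X, Y, ?_, ?_⟩
  · rintro ⟨h1, h2⟩
    have h1' : S = 0 := by simpa [hq0] using h1
    have h2' : T = 0 := by simpa [hq0] using h2
    rw [h1', h2'] at hST
    push_cast at hST
    have h0 : (q : ℚ) * l = 0 := by rw [← hST]; ring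
    exact mul_ne_zero hq0 hl0 h0
  · rw [hXY]
    push_cast at hST
    field_simp
    linear_combination hST

theorem aux_decomp (p q : ℕ) (hp : p.Prime) (hmodp : p % 8 = 1)
    (hmodq : q % 8 = 3) (Z : ℚ) (hZ : ¬ p ∣ Z.den) :
    ∃ e f e' f' : ℤ, (q : ℤ) ∣ e ∧ (∃ k : ℕ, f = 2 ^ k) ∧ ¬ (2 : ℤ) ∣ f' ∧ ¬ (p : ℤ) ∣ f' ∧
      Z = e / f + e' / f' := by
  obtain ⟨k, d, hd, hden⟩ := Nat.exists_eq_two_pow_mul_odd Z.den_nz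
  have hd2 : ¬ 2 ∣ d := by
    have := Nat.odd_iff.mp hd
    omega
  have hc : IsCoprime ((q : ℤ) * d) ((2 : ℤ) ^ k) := by
    apply IsCoprime.pow_right
    have : Nat.Coprime (q * d) 2 := by
      rw [Nat.coprime_comm, Nat.Prime.coprime_iff_not_dvd Nat.prime_two]
      intro h
      rcases Nat.prime_two.dvd_mul.mp h with h | h
      · omega
      · exact hd2 h
    exact_mod_cast Nat.isCoprime_iff_coprime.mpr this
  obtain ⟨u, v, huv⟩ := hc
  have hd0 : (d : ℚ) ≠ 0 := by
    intro h
    have : d = 0 := by exact_mod_cast h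
    exact hd2 (by simp [this])
  refine ⟨q * (u * Z.num), 2 ^ k, v * Z.num, d, dvd_mul_right _ _, ⟨k, rfl⟩, ?_, ?_, ?_⟩
  · intro h; exact hd2 (by exact_mod_cast h)
  · intro h
    apply hZ
    rw [hden]
    exact Dvd.dvd.mul_left (by exact_mod_cast h) _
  · have huv' : (u : ℚ) * (q * d) + v * 2 ^ k = 1 := by exact_mod_cast huv
    conv_lhs => rw [← Rat.num_div_den Z, hden]
    push_cast
    field_simp
    linear_combination (-(Z.num : ℚ)) * huv'

theorem aux_add_den (p : ℕ) (hp : p.Prime) (x y : ℚ) (hx : ¬ p ∣ x.den) (hy : ¬ p ∣ y.den) :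
    ¬ p ∣ (x + y).den := by
  intro h
  rcases hp.dvd_mul.mp (h.trans (Rat.add_den_dvd x y)) with h | h
  · exact hx h
  · exact hy h

/-- For a prime `p ≡ 1 (mod 8)` and a prime `q ≡ 3 (mod 8)`
with Legendre symbol `(p/q) = −1`, `ℤ_(p)` equals the set of rationals of the
form `2(x₁₁ + x₁₂ + y₁₁ + y₁₂)` where
`f₍₋₂p,q₎(x₁ⱼ)² + f₍₋₂p,q₎(x₂ⱼ)² + f₍₂p,q₎(y₁ⱼ)² + f₍₂p,q₎(y₂ⱼ)² = 0`. -/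
theorem stmt18 (p q : ℕ) (hp : p.Prime) (hmodp : p % 8 = 1)
    [Fact q.Prime] (hmodq : q % 8 = 3) (hleg : legendreSym q (p : ℤ) = -1) :
    Zloc p =
      {z : ℚ | ∃ x₁₁ x₁₂ x₁₃ x₁₄ x₂₁ x₂₂ x₂₃ x₂₄
          y₁₁ y₁₂ y₁₃ y₁₄ y₂₁ y₂₂ y₂₃ y₂₄ : ℚ,
        z = 2 * (x₁₁ + x₁₂ + y₁₁ + y₁₂) ∧
        fab (-2 * (p : ℚ)) (q : ℚ) x₁₁ x₁₂ x₁₃ x₁₄ ^ 2 +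
          fab (-2 * (p : ℚ)) (q : ℚ) x₂₁ x₂₂ x₂₃ x₂₄ ^ 2 +
          fab (2 * (p : ℚ)) (q : ℚ) y₁₁ y₁₂ y₁₃ y₁₄ ^ 2 +
          fab (2 * (p : ℚ)) (q : ℚ) y₂₁ y₂₂ y₂₃ y₂₄ ^ 2 = 0} := by
  have hq : q.Prime := Fact.out
  haveI : Fact p.Prime := ⟨hp⟩
  have hleg' : legendreSym p (q : ℤ) = -1 := by
    rw [← legendreSym.quadratic_reciprocity_one_mod_four (by omega) (by omega), hleg]
  have hnsq : ¬ IsSquare ((q : ℤ) : ZMod p) := (legendreSym.eq_neg_one_iff p).mp hleg'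
  have hpZ : Prime (p : ℤ) := Nat.prime_iff_prime_int.mp hp
  have hqZ : Prime (q : ℤ) := Nat.prime_iff_prime_int.mp hq
  have hp2 : ¬ (p : ℤ) ∣ 2 := by
    intro h
    have h' : p ∣ 2 := by exact_mod_cast h
    have := (Nat.prime_dvd_prime_iff_eq hp Nat.prime_two).mp h'
    omega
  have hq2 : ¬ (q : ℤ) ∣ 2 := by
    intro h
    have h' : q ∣ 2 := by exact_mod_cast h
    have := (Nat.prime_dvd_prime_iff_eq hq Nat.prime_two).mp h'
    omega
  have hpm2 : ¬ (p : ℤ) ∣ -2 := by rwa [dvd_neg]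
  ext z
  simp only [Zloc, Set.mem_ofPred_eq]
  constructor
  · intro hz
    have hZ : ¬ p ∣ (z / 4 + 1).den := by
      apply aux_add_den p hp
      · intro h
        have h1 : (z / 4).den ∣ z.den * 4 := by
          have h2 := Rat.mul_den_dvd z (1 / 4)
          have h3 : ((1 : ℚ) / 4).den = 4 := by norm_num
          rw [h3] at h2
          convert h2 using 2
          ring
        rcases hp.dvd_mul.mp (h.trans h1) with h | h
        · exact hz h
        · have := Nat.le_of_dvd (by norm_num) h
          have := hp.two_le
          omega
      · simpa using hp.one_lt.ne'
    obtain ⟨e, f, e', f', hqe, ⟨k, hk⟩, hf'2, hf'p, hZe⟩ :=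
      aux_decomp p q hp hmodp hmodq (z / 4 + 1) hZ
    have hfp : ¬ (p : ℤ) ∣ f := by
      rw [hk]; intro h; exact hp2 (hpZ.dvd_of_dvd_pow h)
    have hfq : ¬ (q : ℤ) ∣ f := by
      rw [hk]; intro h; exact hq2 (hqZ.dvd_of_dvd_pow h)
    have hf0 : (f : ℚ) ≠ 0 := by
      rw [hk]; positivity
    have hf'0 : (f' : ℚ) ≠ 0 := by
      intro h
      have : f' = 0 := by exact_mod_cast h
      exact hf'2 (by simp [this])
    obtain ⟨S, T, X, Y, hST, hXY⟩ := aux_caseX p q hp hmodp hmodq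
      (f ^ 2 + 8 * p * f * e - 8 * p * e ^ 2) f
      (by
        obtain ⟨g, rfl⟩ := hqe
        exact ⟨8 * p * f * g - 8 * p * q * g ^ 2, by ring⟩) hfq
      (by
        intro h
        have h1 : (p : ℤ) ∣ f ^ 2 := by
          obtain ⟨g, hg⟩ := h
          exact ⟨g - 8 * f * e + 8 * e ^ 2, by linear_combination hg⟩
        exact hfp (hpZ.dvd_of_dvd_pow h1))
    obtain ⟨S', T', X', Y', hST', hXY'⟩ := aux_caseY p q hp hmodp hmodq hleg
      (f' ^ 2 - 8 * p * f' * e' + 8 * p * e' ^ 2)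
      (by
        intro h
        have h1 : (2 : ℤ) ∣ f' ^ 2 := by
          obtain ⟨g, hg⟩ := h
          exact ⟨g + 4 * p * f' * e' - 4 * p * e' ^ 2, by linear_combination hg⟩
        exact hf'2 (Int.prime_two.dvd_of_dvd_pow h1))
      (by
        intro h
        have h1 : (p : ℤ) ∣ f' ^ 2 := by
          obtain ⟨g, hg⟩ := h
          exact ⟨g + 8 * f' * e' - 8 * e' ^ 2, by linear_combination hg⟩
        exact hf'p (hpZ.dvd_of_dvd_pow h1))
    obtain ⟨x₁, x₂, x₃, x₄, hx, hxs⟩ := aux_build p q hnsq 2 hp2 e f hf0 S T X Y hST (by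
      push_cast at hXY ⊢
      linear_combination hXY)
    obtain ⟨y₁, y₂, y₃, y₄, hy, hys⟩ := aux_build p q hnsq (-2) hpm2 e' f' hf'0 S' T' X' Y' hST'
      (by
        push_cast at hXY' ⊢
        linear_combination hXY')
    push_cast at hx hy
    refine ⟨x₁, x₂, x₃, x₄, 1, 0, 0, 0, y₁, y₂, y₃, y₄, 1, 0, 0, 0, ?_, ?_⟩
    · linear_combination 4 * hZe - 2 * hxs - 2 * hys
    · have hx' : fab (-2 * (p : ℚ)) q x₁ x₂ x₃ x₄ = 0 := by
        unfold fab; linear_combination hx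
      have hy' : fab (2 * (p : ℚ)) q y₁ y₂ y₃ y₄ = 0 := by
        unfold fab; linear_combination hy
      rw [hx', hy']
      simp [fab]
  · rintro ⟨x₁, x₂, x₃, x₄, s₁, s₂, s₃, s₄, y₁, y₂, y₃, y₄, t₁, t₂, t₃, t₄, hz, h⟩
    have hx' : fab (-2 * (p : ℚ)) q x₁ x₂ x₃ x₄ = 0 := by
      have : fab (-2 * (p : ℚ)) q x₁ x₂ x₃ x₄ ^ 2 = 0 := by
        apply le_antisymm _ (sq_nonneg _)
        have h1 := sq_nonneg (fab (-2 * (p : ℚ)) q s₁ s₂ s₃ s₄)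
        have h2 := sq_nonneg (fab (2 * (p : ℚ)) q y₁ y₂ y₃ y₄)
        have h3 := sq_nonneg (fab (2 * (p : ℚ)) q t₁ t₂ t₃ t₄)
        linarith
      exact pow_eq_zero_iff (two_ne_zero) |>.mp this
    have hy' : fab (2 * (p : ℚ)) q y₁ y₂ y₃ y₄ = 0 := by
      have : fab (2 * (p : ℚ)) q y₁ y₂ y₃ y₄ ^ 2 = 0 := by
        apply le_antisymm _ (sq_nonneg _)
        have h1 := sq_nonneg (fab (-2 * (p : ℚ)) q s₁ s₂ s₃ s₄)
        have h2 := sq_nonneg (fab (-2 * (p : ℚ)) q x₁ x₂ x₃ x₄)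
        have h3 := sq_nonneg (fab (2 * (p : ℚ)) q t₁ t₂ t₃ t₄)
        linarith
      exact pow_eq_zero_iff (two_ne_zero) |>.mp this
    unfold fab at hx' hy'
    obtain ⟨a1, a2, -, -⟩ := aux_integral p q hnsq 2 hp2 1 x₁ x₂ x₃ x₄ (by
      push_cast; linear_combination hx')
    obtain ⟨b1, b2, -, -⟩ := aux_integral p q hnsq (-2) hpm2 1 y₁ y₂ y₃ y₄ (by
      push_cast; linear_combination hy')
    have hs := aux_add_den p hp _ _ (aux_add_den p hp _ _ (aux_add_den p hp _ _ a1 a2) b1) b2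
    rw [hz, two_mul]
    exact aux_add_den p hp _ _ hs hs
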